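/- The following are equivalent: (i) pointwise multiplication M × M → M is continuous with respect to the F_μ-topology (so that M_F is a topological ring); (ii) scalar multiplication ℝ × M → M is continuous with respect to the F_μ-topology (so that M_F is a topological vector space over ℝ); (iii) every A ∈ 𝒜_> can be written as a union of finitely many μ-atoms. -/

import Mathlib

open MeasureTheory Topology Set Pointwise

/-- The set of all real-valued measurable functions on `X`, as a subtype. -/
abbrev Mble (X : Type*) [MeasurableSpace X] : Type _ := {f : X → ℝ // Measurable f}

/-- The basic set `B(f, A, ε)`: all `g` such that for some measurable null set `N`,
`sup_{x ∈ A \ N} |f x - g x| < ε`. -/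
def FBall {X : Type*} [MeasurableSpace X] (μ : Measure X) (f : Mble X) (A : Set X)
    (ε : ℝ) : Set (Mble X) :=
  {g | ∃ N : Set X, MeasurableSet N ∧ μ N = 0 ∧
        ∃ b : ℝ, b < ε ∧ ∀ x ∈ A \ N, |f.1 x - g.1 x| ≤ b}

/-- The `F_μ`-topology on `Mble X`, generated by the sets `B(f, A, ε)` with
`A` measurable of finite measure and `ε > 0`. -/
def FTop {X : Type*} [MeasurableSpace X] (μ : Measure X) : TopologicalSpace (Mble X) :=
  TopologicalSpace.generateFrom
    {S | ∃ (f : Mble X) (A : Set X) (ε : ℝ),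
        MeasurableSet A ∧ μ A < ⊤ ∧ 0 < ε ∧ S = FBall μ f A ε}

/-- A `μ`-atom: a measurable set of positive measure admitting no decomposition into two
disjoint measurable pieces of positive measure. -/
def MuAtom {X : Type*} [MeasurableSpace X] (μ : Measure X) (A : Set X) : Prop :=
  MeasurableSet A ∧ 0 < μ A ∧
    ¬ ∃ B C : Set X, MeasurableSet B ∧ MeasurableSet C ∧ Disjoint B C ∧
        B ∪ C = A ∧ 0 < μ B ∧ 0 < μ C

/-- `G` is a union of finitely many `μ`-atoms. -/
def FinAtomUnion {X : Type*} [MeasurableSpace X] (μ : Measure X) (G : Set X) : Prop :=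
  ∃ (n : ℕ) (F : Fin n → Set X), (∀ i, MuAtom μ (F i)) ∧ G = ⋃ i, F i

/-- `L^∞_G`: the measurable functions that are essentially bounded on `G`. -/
def Linf {X : Type*} [MeasurableSpace X] (μ : Measure X) (G : Set X) : Set (Mble X) :=
  {f | ∃ M₀ : ℝ, 0 < M₀ ∧ ∃ N : Set X, MeasurableSet N ∧ μ N = 0 ∧
        ∀ x ∈ G \ N, |f.1 x| ≤ M₀}

/-- The intersection `⋂_{G ∈ 𝒜_>} L^∞_G`. -/
def InterLinf {X : Type*} [MeasurableSpace X] (μ : Measure X) : Set (Mble X) :=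
  ⋂ G ∈ {A : Set X | MeasurableSet A ∧ 0 < μ A ∧ μ A < ⊤}, Linf μ G

/-- The zero function as an element of `Mble X`. -/
def zeroM {X : Type*} [MeasurableSpace X] : Mble X := ⟨fun _ => 0, measurable_const⟩

/-- `μ` is hemifinite: some sequence in `𝒜_>` almost contains every member of `𝒜_>`. -/
def Hemifinite {X : Type*} [MeasurableSpace X] (μ : Measure X) : Prop :=
  ∃ A : ℕ → Set X, (∀ n, MeasurableSet (A n) ∧ 0 < μ (A n) ∧ μ (A n) < ⊤) ∧
    ∀ F : Set X, MeasurableSet F → 0 < μ F → μ F < ⊤ → ∃ n, μ (F \ A n) = 0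

/-- `G⁺`: functions strictly positive μ-almost everywhere on `G`. -/
def Gplus {X : Type*} [MeasurableSpace X] (μ : Measure X) (G : Set X) : Set (Mble X) :=
  {f | ∃ N : Set X, MeasurableSet N ∧ μ N = 0 ∧ ∀ x ∈ G \ N, 0 < f.1 x}

/-- `G⁰`: functions nonnegative μ-almost everywhere on `G`. -/
def Gzero {X : Type*} [MeasurableSpace X] (μ : Measure X) (G : Set X) : Set (Mble X) :=
  {f | ∃ N : Set X, MeasurableSet N ∧ μ N = 0 ∧ ∀ x ∈ G \ N, 0 ≤ f.1 x}

instance {X : Type*} [MeasurableSpace X] : Add (Mble X) :=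
  ⟨fun f g => ⟨f.1 + g.1, f.2.add g.2⟩⟩

theorem FBall_isOpen {X : Type*} [MeasurableSpace X] (μ : Measure X) (f : Mble X) (A : Set X)
    (ε : ℝ) (hA : MeasurableSet A) (hA' : μ A < ⊤) (hε : 0 < ε) :
    IsOpen[FTop μ] (FBall μ f A ε) :=
  TopologicalSpace.isOpen_generateFrom_of_mem ⟨f, A, ε, hA, hA', hε, rfl⟩

theorem FBall_self {X : Type*} [MeasurableSpace X] (μ : Measure X) (f : Mble X) (A : Set X)
    (ε : ℝ) (hε : 0 < ε) : f ∈ FBall μ f A ε :=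
  ⟨∅, MeasurableSet.empty, by simp, 0, hε, by simp⟩

theorem FBall_mem_nhds {X : Type*} [MeasurableSpace X] (μ : Measure X) (f : Mble X) (A : Set X)
    (ε : ℝ) (hA : MeasurableSet A) (hA' : μ A < ⊤) (hε : 0 < ε) :
    FBall μ f A ε ∈ @nhds _ (FTop μ) f := by
  let _ : TopologicalSpace (Mble X) := FTop μ
  exact (FBall_isOpen μ f A ε hA hA' hε).mem_nhds (FBall_self μ f A ε hε)

theorem atom_Linf {X : Type*} [MeasurableSpace X] (μ : Measure X) (F : Set X)
    (hF : MuAtom μ F) (f : Mble X) : f ∈ Linf μ F := by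
  obtain ⟨hm, hp, hn⟩ := hF
  have hms : ∀ n : ℕ, MeasurableSet {x | |f.1 x| ≤ n} := fun n =>
    measurableSet_le (continuous_abs.measurable.comp f.2) measurable_const
  have : ∃ n : ℕ, 0 < μ (F ∩ {x | |f.1 x| ≤ n}) := by
    by_contra hcon
    push Not at hcon
    have h0 : μ (⋃ n : ℕ, F ∩ {x | |f.1 x| ≤ n}) = 0 :=
      measure_iUnion_null fun n => nonpos_iff_eq_zero.1 (hcon n)
    have : F ⊆ ⋃ n : ℕ, F ∩ {x | |f.1 x| ≤ n} := by
      intro x hx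
      obtain ⟨n, hn⟩ := exists_nat_ge |f.1 x|
      exact mem_iUnion.2 ⟨n, hx, hn⟩
    exact hp.ne' (measure_mono_null this h0)
  obtain ⟨n, hn'⟩ := this
  refine ⟨n + 1, by positivity, F \ {x | |f.1 x| ≤ n}, hm.diff (hms n), ?_, ?_⟩
  · by_contra h
    exact hn ⟨_, _, hm.inter (hms n), hm.diff (hms n), disjoint_sdiff_inter.symm,
      inter_union_diff _ _, hn', pos_iff_ne_zero.2 h⟩
  · rintro x ⟨hx, hx'⟩
    have : |f.1 x| ≤ n := by
      by_contra h
      exact hx' ⟨hx, h⟩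
    linarith

theorem finAtom_Linf {X : Type*} [MeasurableSpace X] (μ : Measure X) (G : Set X)
    (hG : FinAtomUnion μ G) (f : Mble X) : f ∈ Linf μ G := by
  obtain ⟨n, F, hF, rfl⟩ := hG
  choose M hM N hN hN0 hb using fun i => atom_Linf μ (F i) (hF i) f
  refine ⟨∑ i, M i + 1, ?_, ⋃ i, N i, MeasurableSet.iUnion hN, measure_iUnion_null hN0, ?_⟩
  · have := Finset.sum_nonneg (s := Finset.univ) fun i _ => (hM i).le
    linarith
  · rintro x ⟨hx, hx'⟩
    obtain ⟨i, hi⟩ := mem_iUnion.1 hx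
    have h1 := hb i x ⟨hi, fun h => hx' (mem_iUnion.2 ⟨i, h⟩)⟩
    have h2 := Finset.single_le_sum (s := Finset.univ) (fun i _ => (hM i).le) (Finset.mem_univ i)
    linarith

theorem atoms_mul {X : Type*} [MeasurableSpace X] (μ : Measure X)
    (H : ∀ A : Set X, MeasurableSet A → 0 < μ A → μ A < ⊤ → FinAtomUnion μ A) :
    @Continuous (Mble X × Mble X) (Mble X)
        (@instTopologicalSpaceProd _ _ (FTop μ) (FTop μ)) (FTop μ)
        (fun p => ⟨p.1.1 * p.2.1, p.1.2.mul p.2.2⟩) := by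
  letI : TopologicalSpace (Mble X) := FTop μ
  refine continuous_generateFrom_iff.2 ?_
  rintro _ ⟨h, A, ε, hA, hA', hε, rfl⟩
  refine isOpen_iff_mem_nhds.2 ?_
  rintro ⟨f, g⟩ ⟨N, hN, hN0, b, hb, hfg⟩
  have hL : ∀ f : Mble X, f ∈ Linf μ A := by
    intro f
    rcases eq_or_ne (μ A) 0 with h0 | h0
    · exact ⟨1, one_pos, A, hA, h0, by simp⟩
    · exact finAtom_Linf μ A (H A hA (pos_iff_ne_zero.2 h0) hA') f
  obtain ⟨Mf, hMf, Nf, hNf, hNf0, hbf⟩ := hL f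
  obtain ⟨Mg, hMg, Ng, hNg, hNg0, hbg⟩ := hL g
  have hK : 0 < Mf + Mg + 1 := by positivity
  set δ : ℝ := min 1 ((ε - b) / (2 * (Mf + Mg + 1))) with hδ
  have hδ0 : 0 < δ := lt_min one_pos (div_pos (by linarith) (by positivity))
  have hδ1 : δ ≤ 1 := min_le_left _ _
  have hδ2 : δ * (Mf + Mg + 1) ≤ (ε - b) / 2 := by
    have : δ ≤ (ε - b) / (2 * (Mf + Mg + 1)) := min_le_right _ _
    rw [le_div_iff₀ (by positivity)] at this
    linarith
  rw [nhds_prod_eq]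
  refine Filter.mem_of_superset (Filter.prod_mem_prod
    (FBall_mem_nhds μ f A δ hA hA' hδ0) (FBall_mem_nhds μ g A δ hA hA' hδ0)) ?_
  rintro ⟨f', g'⟩ ⟨⟨N1, hN1, hN10, b1, hb1, h1⟩, ⟨N2, hN2, hN20, b2, hb2, h2⟩⟩
  refine ⟨N ∪ (Nf ∪ (Ng ∪ (N1 ∪ N2))), by measurability, by simp [*], b + (ε - b) / 2,
    by linarith, ?_⟩
  rintro x ⟨hx, hx'⟩
  simp only [mem_union, not_or] at hx'
  obtain ⟨x0, x1, x2, x3, x4⟩ := hx'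
  have e0 := hfg x ⟨hx, x0⟩
  have e1 := hbf x ⟨hx, x1⟩
  have e2 := hbg x ⟨hx, x2⟩
  have e3 := h1 x ⟨hx, x3⟩
  have e4 := h2 x ⟨hx, x4⟩
  simp only [Pi.mul_apply] at e0 ⊢
  have e5 : |g'.1 x| ≤ Mg + 1 := by
    have := abs_sub_abs_le_abs_sub (g'.1 x) (g.1 x)
    rw [abs_sub_comm] at this
    linarith
  have e6 : |(f.1 x - f'.1 x) * g'.1 x| ≤ δ * (Mg + 1) := by
    rw [abs_mul]
    exact mul_le_mul (by linarith) e5 (abs_nonneg _) hδ0.le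
  have e7 : |f.1 x * (g.1 x - g'.1 x)| ≤ Mf * δ := by
    rw [abs_mul]
    exact mul_le_mul e1 (by linarith) (abs_nonneg _) hMf.le
  have e8 : h.1 x - f'.1 x * g'.1 x = (h.1 x - f.1 x * g.1 x) +
      (((f.1 x - f'.1 x) * g'.1 x) + (f.1 x * (g.1 x - g'.1 x))) := by ring
  rw [e8]
  refine (abs_add_le _ _).trans ?_
  have := abs_add_le ((f.1 x - f'.1 x) * g'.1 x) (f.1 x * (g.1 x - g'.1 x))
  nlinarith

theorem mul_smul_cont {X : Type*} [MeasurableSpace X] (μ : Measure X)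
    (H : @Continuous (Mble X × Mble X) (Mble X)
        (@instTopologicalSpaceProd _ _ (FTop μ) (FTop μ)) (FTop μ)
        (fun p => ⟨p.1.1 * p.2.1, p.1.2.mul p.2.2⟩)) :
    @Continuous (ℝ × Mble X) (Mble X)
        (@instTopologicalSpaceProd _ _ inferInstance (FTop μ)) (FTop μ)
        (fun p => ⟨fun x => p.1 * p.2.1 x, p.2.2.const_mul p.1⟩) := by
  letI : TopologicalSpace (Mble X) := FTop μ
  have hc : Continuous (fun c : ℝ => (⟨fun _ => c, measurable_const⟩ : Mble X)) := by
    refine continuous_generateFrom_iff.2 ?_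
    rintro _ ⟨h, A, ε, hA, hA', hε, rfl⟩
    refine Metric.isOpen_iff.2 ?_
    rintro c ⟨N, hN, hN0, b, hb, hc⟩
    refine ⟨(ε - b) / 2, by linarith, ?_⟩
    intro d hd
    refine ⟨N, hN, hN0, b + (ε - b) / 2, by linarith, ?_⟩
    intro x hx
    have h1 := hc x hx
    rw [Metric.mem_ball, dist_comm, Real.dist_eq] at hd
    have := abs_sub_le (h.1 x) c d
    simp only at h1 ⊢
    linarith
  exact H.comp ((hc.comp continuous_fst).prodMk continuous_snd)

theorem smul_Linf {X : Type*} [MeasurableSpace X] (μ : Measure X)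
    (H : @Continuous (ℝ × Mble X) (Mble X)
        (@instTopologicalSpaceProd _ _ inferInstance (FTop μ)) (FTop μ)
        (fun p => ⟨fun x => p.1 * p.2.1 x, p.2.2.const_mul p.1⟩))
    (A : Set X) (hA : MeasurableSet A) (hA' : μ A < ⊤) (f : Mble X) : f ∈ Linf μ A := by
  letI : TopologicalSpace (Mble X) := FTop μ
  have h1 : Continuous (fun c : ℝ => (⟨fun x => c * f.1 x, f.2.const_mul c⟩ : Mble X)) :=
    H.comp (continuous_id.prodMk continuous_const)
  have h2 := (FBall_isOpen μ zeroM A 1 hA hA' one_pos).preimage h1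
  obtain ⟨r, hr, hball⟩ := Metric.isOpen_iff.1 h2 0
    ⟨∅, MeasurableSet.empty, by simp, 0, one_pos, by simp [zeroM]⟩
  have hmem : r / 2 ∈ Metric.ball (0 : ℝ) r := by
    rw [Metric.mem_ball, dist_zero_right, Real.norm_eq_abs, abs_of_pos (by positivity)]
    linarith
  obtain ⟨N, hN, hN0, b, hb, hx⟩ := hball hmem
  refine ⟨1 / (r / 2), by positivity, N, hN, hN0, ?_⟩
  intro x hxx
  have := hx x hxx
  simp only [zeroM, zero_sub, abs_neg, abs_mul, abs_of_pos (half_pos hr)] at this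
  rw [le_div_iff₀ (by positivity)]
  linarith

theorem MuAtom.finUnion {X : Type*} [MeasurableSpace X] {μ : Measure X} {A : Set X}
    (h : MuAtom μ A) : FinAtomUnion μ A :=
  ⟨1, fun _ => A, fun _ => h, by simp [iUnion_const]⟩

theorem FinAtomUnion.union {X : Type*} [MeasurableSpace X] {μ : Measure X} {A B : Set X}
    (hA : FinAtomUnion μ A) (hB : FinAtomUnion μ B) : FinAtomUnion μ (A ∪ B) := by
  obtain ⟨n, F, hF, rfl⟩ := hA
  obtain ⟨m, G, hG, rfl⟩ := hB
  refine ⟨n + m, Fin.append F G, ?_, ?_⟩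
  · intro i
    refine Fin.addCases (fun i => ?_) (fun i => ?_) i
    · simpa using hF i
    · simpa using hG i
  · ext x
    simp only [mem_union, mem_iUnion]
    constructor
    · rintro (⟨i, hi⟩ | ⟨i, hi⟩)
      · exact ⟨Fin.castAdd m i, by simpa using hi⟩
      · exact ⟨Fin.natAdd n i, by simpa using hi⟩
    · rintro ⟨i, hi⟩
      revert hi
      refine Fin.addCases (fun i => ?_) (fun i => ?_) i
      · intro hi; exact Or.inl ⟨i, by simpa using hi⟩
      · intro hi; exact Or.inr ⟨i, by simpa using hi⟩

theorem bad_step {X : Type*} [MeasurableSpace X] (μ : Measure X) (S : Set X)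
    (hS : MeasurableSet S ∧ 0 < μ S ∧ ¬ FinAtomUnion μ S) :
    ∃ T : Set X, (MeasurableSet T ∧ 0 < μ T ∧ ¬ FinAtomUnion μ T) ∧ T ⊆ S ∧ 0 < μ (S \ T) := by
  obtain ⟨hm, hp, hn⟩ := hS
  have h1 : ∃ B C : Set X, MeasurableSet B ∧ MeasurableSet C ∧ Disjoint B C ∧
        B ∪ C = S ∧ 0 < μ B ∧ 0 < μ C := by
    by_contra h
    exact hn (MuAtom.finUnion ⟨hm, hp, h⟩)
  obtain ⟨B, C, hB, hC, hd, rfl, hB0, hC0⟩ := h1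
  by_cases hBf : FinAtomUnion μ B
  · have hCf : ¬ FinAtomUnion μ C := fun h => hn (hBf.union h)
    refine ⟨C, ⟨hC, hC0, hCf⟩, subset_union_right, ?_⟩
    rwa [union_diff_right, hd.sdiff_eq_left]
  · refine ⟨B, ⟨hB, hB0, hBf⟩, subset_union_left, ?_⟩
    rwa [union_diff_left, hd.sdiff_eq_right]

theorem Linf_fin {X : Type*} [MeasurableSpace X] (μ : Measure X) (A : Set X)
    (hA : MeasurableSet A) (hp : 0 < μ A) (H : ∀ f : Mble X, f ∈ Linf μ A) :
    FinAtomUnion μ A := by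
  by_contra hbad
  choose! T hT hTS hTd using bad_step μ
  let S : ℕ → Set X := fun n => T^[n] A
  have hS : ∀ n, MeasurableSet (S n) ∧ 0 < μ (S n) ∧ ¬ FinAtomUnion μ (S n) := by
    intro n
    induction n with
    | zero => exact ⟨hA, hp, hbad⟩
    | succ n ih =>
      have := hT _ ih
      simpa only [S, Function.iterate_succ_apply'] using this
  have hs : ∀ n, S (n + 1) = T (S n) := fun n => Function.iterate_succ_apply' T n A
  have hanti : Antitone S := antitone_nat_of_succ_le fun n => by
    rw [hs]; exact hTS _ (hS n)
  let D : ℕ → Set X := fun n => S n \ S (n + 1)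
  have hD : ∀ n, MeasurableSet (D n) := fun n => (hS n).1.diff (hS (n + 1)).1
  have hDp : ∀ n, 0 < μ (D n) := fun n => by
    have := hTd _ (hS n)
    simpa only [D, hs] using this
  have hDA : ∀ n, D n ⊆ A := fun n x hx => hanti (Nat.zero_le n) hx.1
  have hdisj : ∀ n m x, x ∈ D n → x ∈ D m → n = m := by
    intro n m x hn hm
    rcases lt_trichotomy n m with h | h | h
    · exact absurd (hanti (Nat.succ_le_of_lt h) hm.1) hn.2
    · exact h
    · exact absurd (hanti (Nat.succ_le_of_lt h) hn.1) hm.2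
  let f : Mble X := ⟨fun x => (∑' n, (D n).indicator (fun _ => (n : ENNReal)) x).toReal,
    (Measurable.ennreal_tsum fun n => measurable_const.indicator (hD n)).ennreal_toReal⟩
  have hf : ∀ n, ∀ x ∈ D n, f.1 x = n := by
    intro n x hx
    have : (∑' m, (D m).indicator (fun _ => (m : ENNReal)) x) = n := by
      rw [tsum_eq_single n]
      · simp [hx]
      · intro m hm
        exact indicator_of_notMem (fun h => hm (hdisj m n x h hx)) _
    simp [f, this]
  obtain ⟨M, hM, N, hN, hN0, hb⟩ := H f
  obtain ⟨n, hn⟩ := exists_nat_gt M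
  refine (hDp n).ne' (measure_mono_null ?_ hN0)
  intro x hx
  by_contra hxN
  have := hb x ⟨hDA n hx, hxN⟩
  rw [hf n x hx, Nat.abs_cast] at this
  linarith

/-- pointwise multiplication (resp. scalar multiplication) is continuous for
the `F_μ`-topology iff every `A ∈ 𝒜_>` is a finite union of `μ`-atoms. -/
theorem stmt7 {X : Type*} [MeasurableSpace X] (μ : Measure X)
    (hpos : 0 < μ Set.univ)
    (hsub : ∀ A : Set X, MeasurableSet A → μ A = ⊤ →
      ∃ B, B ⊆ A ∧ MeasurableSet B ∧ 0 < μ B ∧ μ B < ⊤) :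
    ((@Continuous (Mble X × Mble X) (Mble X)
        (@instTopologicalSpaceProd _ _ (FTop μ) (FTop μ)) (FTop μ)
        (fun p => ⟨p.1.1 * p.2.1, p.1.2.mul p.2.2⟩)) ↔
      ∀ A : Set X, MeasurableSet A → 0 < μ A → μ A < ⊤ → FinAtomUnion μ A) ∧
    ((@Continuous (ℝ × Mble X) (Mble X)
        (@instTopologicalSpaceProd _ _ inferInstance (FTop μ)) (FTop μ)
        (fun p => ⟨fun x => p.1 * p.2.1 x, p.2.2.const_mul p.1⟩)) ↔
      ∀ A : Set X, MeasurableSet A → 0 < μ A → μ A < ⊤ → FinAtomUnion μ A) := by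
  have h31 := atoms_mul μ
  have h12 := mul_smul_cont μ
  have h23 := fun H A hA hp hA' => Linf_fin μ A hA hp (smul_Linf μ H A hA hA')
  exact ⟨⟨fun h => h23 (h12 h), h31⟩, ⟨h23, fun h => h12 (h31 h)⟩⟩
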